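/- arXiv:1403.6958 — 4 statements merged into one kernel-verified Lean document; each statement's English description precedes it below -/
import Mathlib

section
/- Lower bound of Lemma 1: let a ≥ 1 and let u : ℤ → ℕ be a function with finite support of cardinality h ≥ 1 and total sum Σ_{i∈ℤ} u_i = A with A ≥ h. Define (φ_a(u))_i = max_{k ∈ {i, i−1, …, i−a+1}} u_k. Then Σ_{i∈ℤ} (φ_a(u))_i ≥ A + (a−1)·⌈A/h⌉. -/
theorem sliding_max_sum_lower_bound
    (a : ℤ) (ha : 1 ≤ a) (u : ℤ → ℕ) (hu : (Function.support u).Finite)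
    (h A : ℕ) (hh : h = hu.toFinset.card) (h1 : 1 ≤ h)
    (hA : A = ∑ᶠ i : ℤ, u i) (hAh : h ≤ A) :
    (A : ℤ) + (a - 1) * ⌈(A : ℚ) / (h : ℚ)⌉ ≤
      ((∑ᶠ i : ℤ, (Finset.Icc (i - a + 1) i).sup u : ℕ) : ℤ) := by
  classical
  set S := hu.toFinset with hS
  have hne : S.Nonempty := Finset.card_pos.mp (by omega)
  obtain ⟨m, hmS, hm⟩ := S.exists_max_image u hne
  have hAS : A = ∑ i ∈ S, u i := by
    rw [hA]; exact finsum_eq_sum_of_support_subset _ (by simp [hS])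
  have hceil : ⌈(A : ℚ) / (h : ℚ)⌉ ≤ (u m : ℤ) := by
    rw [Int.ceil_le, div_le_iff₀ (by exact_mod_cast h1)]
    have : A ≤ h * u m := by
      rw [hAS, hh, ← smul_eq_mul]
      exact Finset.sum_le_card_nsmul _ _ _ hm
    rw [mul_comm]
    exact_mod_cast this
  set f : ℤ → ℕ := fun i => (Finset.Icc (i - a + 1) i).sup u with hf
  have hle : ∀ i k, i - a + 1 ≤ k → k ≤ i → u k ≤ f i := fun i k h1 h2 =>
    Finset.le_sup (f := u) (Finset.mem_Icc.mpr ⟨h1, h2⟩)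
  have hmemS : ∀ k, k ∈ S ↔ u k ≠ 0 := by intro k; simp [hS]
  have hfsupp : Function.support f ⊆ ↑(S.biUnion fun j => Finset.Icc j (j + a - 1)) := by
    intro i hi
    by_contra hc
    apply hi
    have : f i ≤ 0 := by
      apply Finset.sup_le
      intro k hk
      rw [Finset.mem_Icc] at hk
      by_contra hk0
      apply hc
      simp only [Finset.coe_biUnion, Set.mem_iUnion, Finset.coe_Icc, Set.mem_Icc]
      exact ⟨k, (hmemS k).2 (by omega), by omega, by omega⟩
    omega
  set T := S.biUnion fun j => Finset.Icc j (j + a - 1) with hT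
  have hfT : ∑ᶠ i, f i = ∑ i ∈ T, f i := finsum_eq_sum_of_support_subset _ hfsupp
  let S1 := S.filter (· < m)
  let S3 := S.filter (m < ·)
  have hsplit : A = ∑ i ∈ S1, u i + u m + ∑ i ∈ S3, u i := by
    rw [hAS, ← Finset.sum_filter_add_sum_filter_not S (· < m), add_assoc]
    congr 1
    have : S.filter (fun i => ¬ i < m) = insert m S3 := by
      ext i
      simp only [S3, Finset.mem_filter, Finset.mem_insert]
      constructor
      · rintro ⟨h1, h2⟩
        by_cases h3 : i = m
        · exact Or.inl h3
        · exact Or.inr ⟨h1, by omega⟩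
      · rintro (rfl | ⟨h1, h2⟩)
        · exact ⟨hmS, by omega⟩
        · exact ⟨h1, by omega⟩
    rw [this, Finset.sum_insert (by simp [S3])]
  let I := Finset.Icc m (m + a - 1)
  let SR := S3.image (· + (a - 1))
  have e1 : ∑ i ∈ S1, u i ≤ ∑ i ∈ S1, f i :=
    Finset.sum_le_sum fun i _ => hle i i (by omega) le_rfl
  have e2 : a.toNat * u m ≤ ∑ i ∈ I, f i := by
    have hc : I.card = a.toNat := by
      simp only [I, Int.card_Icc]; congr 1; ring
    rw [← hc, ← smul_eq_mul]
    apply Finset.card_nsmul_le_sum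
    intro i hi
    rw [Finset.mem_Icc] at hi
    exact hle i m (by omega) (by omega)
  have e3 : ∑ i ∈ S3, u i ≤ ∑ i ∈ SR, f i := by
    rw [Finset.sum_image (by intro x _ y _ h; simpa using h)]
    exact Finset.sum_le_sum fun i _ => hle _ i (by omega) (by omega)
  have d1 : Disjoint S1 I := by
    rw [Finset.disjoint_left]
    intro i h1 h2
    simp only [S1, I, Finset.mem_filter, Finset.mem_Icc] at h1 h2
    omega
  have d2 : Disjoint (S1 ∪ I) SR := by
    rw [Finset.disjoint_left]
    intro i h1 h2
    simp only [S1, I, SR, S3, Finset.mem_union, Finset.mem_image, Finset.mem_filter,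
      Finset.mem_Icc] at h1 h2
    obtain ⟨j, ⟨_, hj⟩, rfl⟩ := h2
    omega
  have hsub : (S1 ∪ I) ∪ SR ⊆ T := by
    intro i hi
    simp only [S1, I, SR, S3, Finset.mem_union, Finset.mem_image, Finset.mem_filter,
      Finset.mem_Icc] at hi
    simp only [hT, Finset.mem_biUnion, Finset.mem_Icc]
    rcases hi with (⟨h1, _⟩ | h1) | ⟨j, ⟨h1, _⟩, rfl⟩
    · exact ⟨i, h1, by omega, by omega⟩
    · exact ⟨m, hmS, h1⟩
    · exact ⟨j, h1, by omega, by omega⟩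
  have e4 := Finset.sum_le_sum_of_subset (f := f) hsub
  rw [Finset.sum_union d2, Finset.sum_union d1] at e4
  rw [hfT]
  have e5 : (A : ℤ) + a * u m ≤ ((∑ i ∈ T, f i : ℕ) : ℤ) + u m := by
    have : A + a.toNat * u m ≤ (∑ i ∈ T, f i) + u m := by omega
    have h2 : ((a.toNat : ℕ) : ℤ) = a := Int.toNat_of_nonneg (by omega)
    rw [← h2]
    exact_mod_cast this
  have e6 := mul_le_mul_of_nonneg_left hceil (show 0 ≤ a - 1 by omega)
  linarith
end

section
/- Achievability part of Lemma 1: let a ≥ 1, let A ≥ h ≥ 1 be integers, and write A = qh + r with 0 ≤ r < h (Euclidean division). Define v : ℤ → ℕ by v_i = q+1 if 0 ≤ i < r, v_i = q if r ≤ i < h, and v_i = 0 otherwise. Then v has support of cardinality exactly h, Σ_{i∈ℤ} v_i = A, and Σ_{i∈ℤ} (φ_a(v))_i = A + (a−1)·⌈A/h⌉, where (φ_a(v))_i = max_{k ∈ {i, i−1, …, i−a+1}} v_k. -/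
lemma finsum_two_steps (q m s : ℕ) (hs : s ≤ m) :
    (∑ᶠ i : ℤ, ((if 0 ≤ i ∧ i < (m : ℤ) then q else 0) +
      (if 0 ≤ i ∧ i < (s : ℤ) then 1 else 0))) = q * m + s := by
  have key : ∀ c n : ℕ, n ≤ m →
      ∑ i ∈ Finset.Ico (0 : ℤ) m, (if 0 ≤ i ∧ i < (n : ℤ) then c else 0) = c * n := by
    intro c n hn
    rw [← Finset.sum_filter]
    have : (Finset.Ico (0 : ℤ) m).filter (fun i => 0 ≤ i ∧ i < (n : ℤ)) = Finset.Ico (0 : ℤ) n := by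
      ext i
      simp only [Finset.mem_filter, Finset.mem_Ico]
      omega
    rw [this]
    simp [mul_comm]
  rw [finsum_eq_sum_of_support_subset (s := Finset.Ico (0 : ℤ) m)]
  · rw [Finset.sum_add_distrib, key q m le_rfl, key 1 s hs, one_mul]
  · intro i hi
    simp only [Function.mem_support] at hi
    simp only [Finset.coe_Ico, Set.mem_Ico]
    by_contra hc
    apply hi
    simp [if_neg hc, if_neg (show ¬ (0 ≤ i ∧ i < (s : ℤ)) by omega)]

theorem sliding_max_sum_achievability
    (a : ℤ) (ha : 1 ≤ a) (h A : ℕ) (h1 : 1 ≤ h) (hAh : h ≤ A)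
    (q r : ℕ) (hq : q = A / h) (hr : r = A % h)
    (v : ℤ → ℕ)
    (hv : v = fun i : ℤ => if 0 ≤ i ∧ i < (r : ℤ) then q + 1
      else if (r : ℤ) ≤ i ∧ i < (h : ℤ) then q else 0) :
    (Function.support v).ncard = h ∧
      (∑ᶠ i : ℤ, v i) = A ∧
      ((∑ᶠ i : ℤ, (Finset.Icc (i - a + 1) i).sup v : ℕ) : ℤ) =
        (A : ℤ) + (a - 1) * ⌈(A : ℚ) / (h : ℚ)⌉ := by
  have hrh : r < h := by rw [hr]; exact Nat.mod_lt _ h1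
  have hA : q * h + r = A := by rw [hq, hr, mul_comm]; exact Nat.div_add_mod A h
  have hq1 : 1 ≤ q := by rw [hq]; exact Nat.div_pos hAh h1
  clear hq hr
  obtain ⟨b, rfl⟩ : ∃ b : ℕ, a = b + 1 := ⟨(a - 1).toNat, by omega⟩
  refine ⟨?_, ?_, ?_⟩
  · have : Function.support v = ((Finset.Ico (0 : ℤ) h : Finset ℤ) : Set ℤ) := by
      ext i
      simp only [hv, Function.mem_support, Finset.coe_Ico, Set.mem_Ico]
      split_ifs <;> omega
    rw [this, Set.ncard_coe_finset]
    simp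
  · rw [← hA, ← finsum_two_steps q h r hrh.le]
    apply finsum_congr
    intro i
    simp only [hv]
    split_ifs <;> omega
  · obtain ⟨s, hs0, hs1⟩ : ∃ s : ℕ, (r = 0 → s = 0) ∧ (r ≠ 0 → s = r + b) :=
      ⟨if r = 0 then 0 else r + b, by intro h; simp [h], by intro h; simp [h]⟩
    have hsum : (∑ᶠ i : ℤ, (Finset.Icc (i - ((b : ℤ) + 1) + 1) i).sup v : ℕ) = q * (h + b) + s := by
      rw [← finsum_two_steps q (h + b) s (by omega)]
      apply finsum_congr
      intro i
      apply le_antisymm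
      · apply Finset.sup_le
        intro k hk
        rw [Finset.mem_Icc] at hk
        simp only [hv]
        push_cast
        split_ifs <;> omega
      · by_cases hi : 0 ≤ i ∧ i < (h : ℤ) + b
        · have hk : max 0 (i - b) ∈ Finset.Icc (i - ((b : ℤ) + 1) + 1) i := by
            rw [Finset.mem_Icc]; omega
          refine le_trans ?_ (Finset.le_sup hk)
          simp only [hv]
          push_cast
          split_ifs <;> omega
        · push_cast
          rw [if_neg hi, if_neg (by omega)]
          simp
    rw [hsum]
    have hpos : (0 : ℚ) < h := by exact_mod_cast h1
    have hAQ : (A : ℚ) = q * h + r := by exact_mod_cast hA.symm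
    have hrQ : (r : ℚ) < h := by exact_mod_cast hrh
    by_cases hr0 : r = 0
    · have hc : ⌈(A : ℚ) / (h : ℚ)⌉ = (q : ℤ) := by
        rw [hAQ, hr0]
        simp [hpos.ne']
      rw [hc, hs0 hr0, ← hA, hr0]
      push_cast
      ring
    · have hc : ⌈(A : ℚ) / (h : ℚ)⌉ = (q : ℤ) + 1 := by
        have hrp : (0 : ℚ) < r := by exact_mod_cast Nat.pos_of_ne_zero hr0
        rw [Int.ceil_eq_iff, lt_div_iff₀ hpos, div_le_iff₀ hpos, hAQ]
        push_cast
        constructor <;> nlinarith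
      rw [hc, hs1 hr0, ← hA]
      push_cast
      ring
end

section
/- Lower bound of Proposition 2 (rectangular patterns): let a, b ≥ 1 be integers, let P = {(i, j) ∈ ℤ² : 0 ≤ i < a, 0 ≤ j < b}, and let E ⊆ ℤ² be a finite set with |E| = A ≥ 1. Then |E + P| ≥ A + (a−1)(b−1) + min_{h ∈ {1, …, A}} [ (a−1)·⌈A/h⌉ + (b−1)·h ]. -/
open Pointwise

lemma rect_fiber_bound (f : ℤ × ℤ →+ ℤ) (E J : Finset (ℤ × ℤ)) (hJ : J.Nonempty)
    (hf : ∀ j ∈ J, f j = 0) :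
    (E.card : ℤ) + ((J.card : ℤ) - 1) * ((E.image f).card : ℤ) ≤ ((E + J).card : ℤ) := by
  classical
  have h1 : E.card = ∑ y ∈ E.image f, (E.filter (fun e => f e = y)).card :=
    Finset.card_eq_sum_card_fiberwise (fun e he => Finset.mem_coe.2 (Finset.mem_image_of_mem f he))
  have h2 : (E + J).card = ∑ y ∈ E.image f, ((E + J).filter (fun e => f e = y)).card := by
    apply Finset.card_eq_sum_card_fiberwise
    intro x hx
    obtain ⟨e, he, j, hj, rfl⟩ := Finset.mem_add.1 (Finset.mem_coe.1 hx)
    rw [Finset.mem_coe, map_add, hf j hj, add_zero]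
    exact Finset.mem_image_of_mem f he
  rw [h1, h2, mul_comm]
  push_cast
  rw [← nsmul_eq_mul, ← Finset.sum_const, ← Finset.sum_add_distrib]
  apply Finset.sum_le_sum
  intro y hy
  have hne : (E.filter (fun e => f e = y)).Nonempty := by
    obtain ⟨e, he, rfl⟩ := Finset.mem_image.1 hy
    exact ⟨e, by simp [he]⟩
  have h3 := cauchy_davenport_of_isAddTorsionFree hne hJ
  have h4 : E.filter (fun e => f e = y) + J ⊆ (E + J).filter (fun e => f e = y) := by
    intro x hx
    obtain ⟨e, he, j, hj, rfl⟩ := Finset.mem_add.1 hx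
    rw [Finset.mem_filter] at he ⊢
    exact ⟨Finset.add_mem_add he.1 hj, by rw [map_add, hf j hj, add_zero, he.2]⟩
  have h5 := Finset.card_le_card h4
  omega

theorem rect_pattern_lower_bound
    (a b : ℤ) (ha : 1 ≤ a) (hb : 1 ≤ b)
    (A : ℕ) (hA : 1 ≤ A) (E : Finset (ℤ × ℤ)) (hE : E.card = A) :
    (A : ℤ) + (a - 1) * (b - 1) +
        (Finset.Icc 1 A).inf' (Finset.nonempty_Icc.mpr hA)
          (fun h : ℕ => (a - 1) * ⌈(A : ℚ) / (h : ℚ)⌉ + (b - 1) * (h : ℤ)) ≤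
      (((E + (Finset.Ico (0 : ℤ) a ×ˢ Finset.Ico (0 : ℤ) b)).card : ℕ) : ℤ) := by
  classical
  set I : Finset (ℤ × ℤ) := Finset.Ico (0 : ℤ) a ×ˢ {0} with hI
  set J : Finset (ℤ × ℤ) := {0} ×ˢ Finset.Ico (0 : ℤ) b with hJ
  have hP : Finset.Ico (0 : ℤ) a ×ˢ Finset.Ico (0 : ℤ) b = I + J := by
    ext ⟨x, y⟩
    constructor
    · intro h
      rw [Finset.mem_product] at h
      exact Finset.mem_add.2 ⟨(x, 0), Finset.mem_product.2 ⟨h.1, Finset.mem_singleton_self _⟩,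
        (0, y), Finset.mem_product.2 ⟨Finset.mem_singleton_self _, h.2⟩, by simp⟩
    · intro h
      obtain ⟨⟨i, i'⟩, hi, ⟨j, j'⟩, hj, hij⟩ := Finset.mem_add.1 h
      simp only [hI, hJ, Finset.mem_product, Finset.mem_singleton, Finset.mem_Ico,
        Prod.mk_add_mk, Prod.mk.injEq] at hi hj hij ⊢
      omega
  have hIc : (I.card : ℤ) = a := by simp [hI]; omega
  have hJc : (J.card : ℤ) = b := by simp [hJ]; omega
  have hIne : I.Nonempty := ⟨(0, 0), by simp [hI]; omega⟩
  have hJne : J.Nonempty := ⟨(0, 0), by simp [hJ]; omega⟩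
  have hEne : E.Nonempty := Finset.card_pos.1 (by omega)
  have b1 := rect_fiber_bound (AddMonoidHom.snd ℤ ℤ) E I hIne (by
    intro j hj; exact Finset.mem_singleton.1 (Finset.mem_product.1 hj).2)
  have b2 := rect_fiber_bound (AddMonoidHom.fst ℤ ℤ) (E + I) J hJne (by
    intro j hj; exact Finset.mem_singleton.1 (Finset.mem_product.1 hj).1)
  set H := (E.image (AddMonoidHom.snd ℤ ℤ)).card with hH
  set W := (E.image (AddMonoidHom.fst ℤ ℤ)).card with hW
  have hWI : (W : ℤ) + a - 1 ≤ ((E + I).image (AddMonoidHom.fst ℤ ℤ)).card := by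
    rw [Finset.image_add]
    have h3 := cauchy_davenport_of_isAddTorsionFree (hEne.image (AddMonoidHom.fst ℤ ℤ))
      (hIne.image (AddMonoidHom.fst ℤ ℤ))
    have h4 : (I.image (AddMonoidHom.fst ℤ ℤ)).card = I.card := by
      apply Finset.card_image_of_injOn
      intro x hx y hy hxy
      have hx2 := Finset.mem_singleton.1 (Finset.mem_product.1 (Finset.mem_coe.1 hx)).2
      have hy2 := Finset.mem_singleton.1 (Finset.mem_product.1 (Finset.mem_coe.1 hy)).2
      exact Prod.ext hxy (hx2.trans hy2.symm)
    omega
  have hWpos : 1 ≤ W := Finset.card_pos.2 (hEne.image _)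
  have hWA : W ≤ A := hE ▸ Finset.card_image_le
  have hWH : A ≤ W * H := by
    rw [← hE, hW, hH, ← Finset.card_product]
    apply Finset.card_le_card
    intro x hx
    exact Finset.mem_product.2 ⟨Finset.mem_image_of_mem (AddMonoidHom.fst ℤ ℤ) hx,
      Finset.mem_image_of_mem (AddMonoidHom.snd ℤ ℤ) hx⟩
  have hceil : ⌈(A : ℚ) / (W : ℚ)⌉ ≤ (H : ℤ) := by
    rw [Int.ceil_le, div_le_iff₀ (by exact_mod_cast hWpos), mul_comm]
    exact_mod_cast hWH
  have hinf := Finset.inf'_le (fun h : ℕ => (a - 1) * ⌈(A : ℚ) / (h : ℚ)⌉ + (b - 1) * (h : ℤ))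
    (Finset.mem_Icc.2 ⟨hWpos, hWA⟩)
  have m1 := mul_le_mul_of_nonneg_left hceil (sub_nonneg.2 ha)
  have m2 := mul_le_mul_of_nonneg_left hWI (sub_nonneg.2 hb)
  rw [hP, ← add_assoc]
  rw [hIc, hE] at b1
  rw [hJc] at b2
  linarith
end

section
/- Achievability part of Proposition 2 (rectangular patterns): let a, b ≥ 1 be integers, let P = {(i, j) ∈ ℤ² : 0 ≤ i < a, 0 ≤ j < b}, and let A ≥ h ≥ 1 be integers with A = qh + r the Euclidean division of A by h. Define the rectangular-shaped set E = {(i, j) ∈ ℤ² : 0 ≤ i < r, 0 ≤ j ≤ q} ∪ {(i, j) ∈ ℤ² : r ≤ i < h, 0 ≤ j < q}. Then |E| = A and |E + P| = A + (a−1)(b−1) + (a−1)·⌈A/h⌉ + (b−1)·h. -/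
open Pointwise

theorem rect_pattern_achievability
    (a b : ℤ) (ha : 1 ≤ a) (hb : 1 ≤ b)
    (A h : ℕ) (h1 : 1 ≤ h) (hAh : h ≤ A)
    (q r : ℕ) (hq : q = A / h) (hr : r = A % h)
    (E : Finset (ℤ × ℤ))
    (hE : E = (Finset.Ico (0 : ℤ) (r : ℤ) ×ˢ Finset.Icc (0 : ℤ) (q : ℤ)) ∪
      (Finset.Ico (r : ℤ) (h : ℤ) ×ˢ Finset.Ico (0 : ℤ) (q : ℤ))) :
    E.card = A ∧
      (((E + (Finset.Ico (0 : ℤ) a ×ˢ Finset.Ico (0 : ℤ) b)).card : ℕ) : ℤ) =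
        (A : ℤ) + (a - 1) * (b - 1) + (a - 1) * ⌈(A : ℚ) / (h : ℚ)⌉ + (b - 1) * (h : ℤ) := by
  have hdiv : A = q * h + r := by
    rw [hq, hr, Nat.mul_comm]; exact (Nat.div_add_mod A h).symm
  have hrh : r < h := by rw [hr]; exact Nat.mod_lt _ h1
  have hq1 : 1 ≤ q := by rw [hq]; exact (Nat.one_le_div_iff h1).2 hAh
  clear hq hr
  have hhQ : (0 : ℚ) < (h : ℚ) := by exact_mod_cast h1
  constructor
  · rw [hE, Finset.card_union_of_disjoint]
    · simp only [Finset.card_product, Int.card_Ico, Int.card_Icc]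
      have e1 : ((r : ℤ) - 0).toNat = r := by omega
      have e2 : ((q : ℤ) + 1 - 0).toNat = q + 1 := by omega
      have e3 : ((h : ℤ) - r).toNat = h - r := by omega
      have e4 : ((q : ℤ) - 0).toNat = q := by omega
      rw [e1, e2, e3, e4, hdiv]
      obtain ⟨d, rfl⟩ := Nat.exists_eq_add_of_lt hrh
      have : r + d + 1 - r = d + 1 := by omega
      rw [this]; ring
    · rw [Finset.disjoint_left]
      rintro ⟨x, y⟩ hx hy
      simp only [Finset.mem_product, Finset.mem_Ico, Finset.mem_Icc] at hx hy
      omega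
  · have hA : (A : ℤ) = q * h + r := by exact_mod_cast hdiv
    rcases Nat.eq_zero_or_pos r with h0 | hpos
    · have hc : ⌈(A : ℚ) / (h : ℚ)⌉ = (q : ℤ) := by
        have : (A : ℚ) / (h : ℚ) = ((q : ℤ) : ℚ) := by
          rw [div_eq_iff hhQ.ne', hdiv, h0]; push_cast; ring
        rw [this, Int.ceil_intCast]
      have hS : E + (Finset.Ico (0 : ℤ) a ×ˢ Finset.Ico (0 : ℤ) b) =
          Finset.Ico (0 : ℤ) (h + a - 1) ×ˢ Finset.Ico (0 : ℤ) (q + b - 1) := by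
        ext ⟨x, y⟩
        simp only [hE, Finset.mem_add, Finset.mem_union, Finset.mem_product, Finset.mem_Ico,
          Finset.mem_Icc, Prod.exists, Prod.mk_add_mk, Prod.mk.injEq]
        constructor
        · rintro ⟨u, v, huv, s, t, hst, hx, hy⟩
          omega
        · intro hxy
          refine ⟨min x (h - 1), min y (q - 1), ?_, x - min x (h - 1), y - min y (q - 1), ?_, ?_, ?_⟩ <;>
            omega
      rw [hS, hc, Finset.card_product, Int.card_Ico, Int.card_Ico]
      push_cast [-Int.ofNat_toNat]
      rw [Int.toNat_of_nonneg (by omega), Int.toNat_of_nonneg (by omega), hA, h0]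
      push_cast; ring
    · have hc : ⌈(A : ℚ) / (h : ℚ)⌉ = (q : ℤ) + 1 := by
        have hrQ : (0 : ℚ) < (r : ℚ) := by exact_mod_cast hpos
        have hrhQ : (r : ℚ) < (h : ℚ) := by exact_mod_cast hrh
        rw [Int.ceil_eq_iff, lt_div_iff₀ hhQ, div_le_iff₀ hhQ, hdiv]
        push_cast
        constructor <;> nlinarith
      have hS : E + (Finset.Ico (0 : ℤ) a ×ˢ Finset.Ico (0 : ℤ) b) =
          (Finset.Ico (0 : ℤ) (r + a - 1) ×ˢ Finset.Ico (0 : ℤ) (q + b)) ∪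
          (Finset.Ico (r + a - 1 : ℤ) (h + a - 1) ×ˢ Finset.Ico (0 : ℤ) (q + b - 1)) := by
        ext ⟨x, y⟩
        simp only [hE, Finset.mem_add, Finset.mem_union, Finset.mem_product, Finset.mem_Ico,
          Finset.mem_Icc, Prod.exists, Prod.mk_add_mk, Prod.mk.injEq]
        constructor
        · rintro ⟨u, v, huv, s, t, hst, hx, hy⟩
          omega
        · rintro (hxy | hxy)
          · refine ⟨min x (r - 1), min y q, Or.inl ?_, x - min x (r - 1), y - min y q, ?_, ?_, ?_⟩ <;>
              omega
          · refine ⟨min x (h - 1), min y (q - 1), Or.inr ?_, x - min x (h - 1),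
              y - min y (q - 1), ?_, ?_, ?_⟩ <;> omega
      have hD : Disjoint (Finset.Ico (0 : ℤ) (r + a - 1) ×ˢ Finset.Ico (0 : ℤ) (q + b))
          (Finset.Ico (r + a - 1 : ℤ) (h + a - 1) ×ˢ Finset.Ico (0 : ℤ) (q + b - 1)) := by
        rw [Finset.disjoint_left]
        rintro ⟨x, y⟩ hx hy
        simp only [Finset.mem_product, Finset.mem_Ico] at hx hy
        omega
      rw [hS, hc, Finset.card_union_of_disjoint hD]
      simp only [Finset.card_product, Int.card_Ico]
      push_cast [-Int.ofNat_toNat]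
      rw [Int.toNat_of_nonneg (by omega), Int.toNat_of_nonneg (by omega),
        Int.toNat_of_nonneg (by omega), Int.toNat_of_nonneg (by omega), hA]
      ring
end
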